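/- arXiv:2402.08484 — 2 statements merged into one kernel-verified Lean document; each statement's English description precedes it below -/
import Mathlib

section
/- (Cells of Kuhn's triangulation lie in a large simplex.) Let n, N ≥ 1, let x ∈ {0,1,…,N−1}^n and let σ be a permutation of {1,…,n}; define the cell vertices w⁰ := x and w^i := w^{i−1} + e^{σ(i)} for i = 1,…,n. Then there exists a permutation π of {1,…,n} such that every vertex w^i (i = 0,…,n) lies in the large simplex NΔ̂_π := {y ∈ [0,N]^n : y_{π(1)} ≥ y_{π(2)} ≥ … ≥ y_{π(n)}}; consequently conv{w⁰,…,w^n} ⊆ NΔ̂_π. -/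
/-!
The vertex `w^i` arises from `x` by raising by one the coordinates `j` with `σ⁻¹(j) < i`
(`cellVertex_eq`). Let `π` list the coordinates by decreasing `x j`, ties broken by
increasing `σ⁻¹(j)`. If `a` precedes `b` in this order, then either `x b + 1 ≤ x a`, so a single
unit added to `b` cannot reverse the inequality, or `x a = x b` and `a` is raised no later than
`b`; hence `w^i_b ≤ w^i_a` for every `i`. The statement on the convex hull follows because
`NΔ̂_π` is cut out by linear inequalities and so is convex (`convex_NDeltaHat`).
-/

/-- The vertices `w⁰ = x`, `w^{i+1} = w^i + e^{σ(i+1)}` of the cell of Kuhn's triangulation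
determined by the corner `x` and the permutation `σ` (indices 0-based). -/
def cellVertex {n : ℕ} (x : Fin n → ℕ) (σ : Equiv.Perm (Fin n)) : ℕ → Fin n → ℕ
  | 0 => x
  | (i + 1) => fun j =>
      cellVertex x σ i j + if h : i < n then (if σ ⟨i, h⟩ = j then 1 else 0) else 0

/-- The values of `y` read in the order given by the permutation `π` (0-based), extended by
`0` beyond index `n`. -/
def seqOf {n : ℕ} (π : Equiv.Perm (Fin n)) (y : Fin n → ℝ) : ℕ → ℝ :=
  fun j => if h : j < n then y (π ⟨j, h⟩) else 0

/-- The large simplex `NΔ̂_π = {y ∈ [0,N]^n : y_{π(1)} ≥ y_{π(2)} ≥ ⋯ ≥ y_{π(n)}}`. -/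
def NDeltaHat (n N : ℕ) (π : Equiv.Perm (Fin n)) : Set (Fin n → ℝ) :=
  {y | (∀ j, 0 ≤ y j ∧ y j ≤ (N : ℝ)) ∧ ∀ j, j + 1 < n → seqOf π y (j + 1) ≤ seqOf π y j}

theorem cellVertex_eq {n : ℕ} (x : Fin n → ℕ) (σ : Equiv.Perm (Fin n)) (j : Fin n) (i : ℕ) :
    cellVertex x σ i j = x j + if (σ.symm j : ℕ) < i then 1 else 0 := by
  induction i with
  | zero => simp [cellVertex]
  | succ i ih =>
    have hlt := (σ.symm j).isLt
    simp only [cellVertex, ih]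
    by_cases h : i < n
    · have key : σ ⟨i, h⟩ = j ↔ (σ.symm j : ℕ) = i := by
        rw [← Equiv.eq_symm_apply, Fin.ext_iff]
        exact eq_comm
      simp only [h, dif_pos, key]
      split_ifs <;> omega
    · simp only [h, dif_neg, not_false_eq_true]
      split_ifs <;> omega

theorem convex_NDeltaHat (n N : ℕ) (π : Equiv.Perm (Fin n)) : Convex ℝ (NDeltaHat n N π) := by
  rintro y ⟨hy, hy'⟩ z ⟨hz, hz'⟩ a b ha hb hab
  refine ⟨fun j => ⟨?_, ?_⟩, fun j hj => ?_⟩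
  · have h₁ := mul_nonneg ha (hy j).1
    have h₂ := mul_nonneg hb (hz j).1
    simpa using add_nonneg h₁ h₂
  · have h₁ := mul_le_mul_of_nonneg_left (hy j).2 ha
    have h₂ := mul_le_mul_of_nonneg_left (hz j).2 hb
    have h₃ : a * (N : ℝ) + b * N = N := by rw [← add_mul, hab, one_mul]
    simp only [Pi.add_apply, Pi.smul_apply, smul_eq_mul]
    linarith
  · have h₁ := mul_le_mul_of_nonneg_left (hy' j hj) ha
    have h₂ := mul_le_mul_of_nonneg_left (hz' j hj) hb
    have hj₀ : j < n := by omega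
    simp only [seqOf, hj, hj₀, dif_pos, Pi.add_apply, Pi.smul_apply, smul_eq_mul] at h₁ h₂ ⊢
    linarith

/-- Every cell of Kuhn's triangulation of `[0,N]^n` is contained in a large simplex
`NΔ̂_π`: there is a permutation `π` such that all the cell's vertices, and hence their
convex hull, lie in `NΔ̂_π`. -/
theorem cell_in_large_simplex (n N : ℕ) (hn : 1 ≤ n) (hN : 1 ≤ N)
    (x : Fin n → ℕ) (hx : ∀ j, x j ≤ N - 1) (σ : Equiv.Perm (Fin n)) :
    ∃ π : Equiv.Perm (Fin n),
      (∀ i ≤ n, (fun j => (cellVertex x σ i j : ℝ)) ∈ NDeltaHat n N π) ∧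
      convexHull ℝ {y : Fin n → ℝ | ∃ i ≤ n, y = fun j => (cellVertex x σ i j : ℝ)} ⊆
        NDeltaHat n N π := by
  -- The sorting key: decreasing `x j` first, then increasing `σ⁻¹(j)`.
  let key : Fin n → ℕᵒᵈ ×ₗ Fin n := fun j => toLex (OrderDual.toDual (x j), σ.symm j)
  have hvert : ∀ i ≤ n,
      (fun j => (cellVertex x σ i j : ℝ)) ∈ NDeltaHat n N (Tuple.sort key) := by
    intro i _
    refine ⟨fun j => ⟨Nat.cast_nonneg _, ?_⟩, fun j hj => ?_⟩
    · have := hx j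
      rw [Nat.cast_le, cellVertex_eq]
      split_ifs <;> omega
    · have hj₀ : j < n := by omega
      have hle : key (Tuple.sort key ⟨j, hj₀⟩) ≤ key (Tuple.sort key ⟨j + 1, hj⟩) :=
        Tuple.monotone_sort key (Fin.mk_le_mk.2 (Nat.le_succ j))
      simp only [seqOf, hj, hj₀, dif_pos, Nat.cast_le, cellVertex_eq]
      generalize Tuple.sort key ⟨j, hj₀⟩ = a at hle ⊢
      generalize Tuple.sort key ⟨j + 1, hj⟩ = b at hle ⊢
      rcases Prod.Lex.le_iff.1 hle with h | ⟨h, h'⟩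
      · have h : x b < x a := h
        split_ifs <;> omega
      · have h : x a = x b := h
        have h' : (σ.symm a : ℕ) ≤ σ.symm b := h'
        split_ifs <;> omega
  refine ⟨Tuple.sort key, hvert, convexHull_min ?_ (convex_NDeltaHat n N _)⟩
  rintro y ⟨i, hi, rfl⟩
  exact hvert i hi
end

section
/- (Simmons-Su labeling.) Let n, N ≥ 1. For a vertex v ∈ {0,1,…,N}^n let α(v) = (α(v)_0,…,α(v)_n) denote its barycentric coordinates with respect to the vertices of any large simplex NΔ̂_π containing it (these coordinates are independent of the choice of π, and N·α(v)_i is an integer for all i), and define the label L(v) := Σ_{i=0}^n i·N·α(v)_i mod (n+1). Then for every cell of Kuhn's triangulation of [0,N]^n with vertices w⁰, w¹, …, w^n, the labels L(w⁰), L(w¹), …, L(w^n) are pairwise distinct, i.e. {L(w⁰),…,L(w^n)} = {0,1,…,n}. -/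
/-- The `i`-th vertex `v^i_π = N·(e^{π(1)} + ⋯ + e^{π(i)})` of the large simplex `NΔ̂_π`
(so `v⁰_π = 0`), with `i` ranging over `{0, …, n}`. -/
def largeVertex (n N : ℕ) (π : Equiv.Perm (Fin n)) (i : ℕ) : Fin n → ℝ :=
  fun j => if (π.symm j : ℕ) < i then (N : ℝ) else 0

lemma cellVertex_apply {n : ℕ} (x : Fin n → ℕ) (σ : Equiv.Perm (Fin n)) (k : ℕ) (j : Fin n) :
    cellVertex x σ k j = x j + if (σ.symm j : ℕ) < k then 1 else 0 := by
  induction k with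
  | zero => simp [cellVertex]
  | succ k ih =>
    simp only [cellVertex, ih]
    by_cases h : k < n
    · have key : (σ ⟨k, h⟩ = j) ↔ (σ.symm j : ℕ) = k := by
        rw [← Equiv.eq_symm_apply, Fin.ext_iff]
        exact eq_comm
      simp only [h, dite_true, key]
      split_ifs <;> omega
    · have := (σ.symm j).isLt
      simp only [h, dite_false]
      split_ifs <;> omega

/-- Exactly `i` coordinates precede position `i` in the order `π`. -/
lemma sum_indicator_symm_lt {n : ℕ} (π : Equiv.Perm (Fin n)) (i : ℕ) (hi : i ≤ n) :
    ∑ j : Fin n, (if (π.symm j : ℕ) < i then 1 else 0 : ℕ) = i := by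
  rw [Equiv.sum_comp π.symm (fun p : Fin n => if (p : ℕ) < i then 1 else 0),
    Fin.sum_univ_eq_sum_range (fun p => if p < i then 1 else 0) n, ← Finset.sum_filter,
    Finset.sum_const, smul_eq_mul, mul_one]
  have : (Finset.range n).filter (fun p => p < i) = Finset.range i := by
    ext p
    simp only [Finset.mem_filter, Finset.mem_range]
    omega
  rw [this, Finset.card_range]

lemma sum_eq_of_barycentric {n : ℕ} (π : Equiv.Perm (Fin n)) (v : Fin n → ℕ)
    (m : Fin (n + 1) → ℤ)
    (h : ∀ j, (v j : ℤ) = ∑ i : Fin (n + 1), if (π.symm j : ℕ) < i then m i else 0) :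
    ∑ i : Fin (n + 1), (i.val : ℤ) * m i = ∑ j, (v j : ℤ) := by
  simp_rw [h]
  rw [Finset.sum_comm]
  refine Finset.sum_congr rfl fun i _ => ?_
  have hi := sum_indicator_symm_lt π i (Nat.lt_succ_iff.mp i.isLt)
  calc (i.val : ℤ) * m i
      = ((∑ j : Fin n, (if (π.symm j : ℕ) < i then 1 else 0 : ℕ) : ℕ) : ℤ) * m i := by rw [hi]
    _ = _ := by
      push_cast
      rw [Finset.sum_mul]
      exact Finset.sum_congr rfl fun j _ => by split_ifs <;> simp

lemma sum_range_telescope_ite (t : ℕ → ℤ) (p M : ℕ) :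
    ∑ i ∈ Finset.range M, (if p ≤ i then t i - t (i + 1) else 0)
      = if p ≤ M then t p - t M else 0 := by
  induction M with
  | zero =>
    by_cases h : p = 0 <;> simp [h]
  | succ M ih =>
    rw [Finset.sum_range_succ, ih]
    by_cases h : p ≤ M
    · simp [h, Nat.le_succ_of_le h]
    · by_cases h2 : p = M + 1
      · simp [h2]
      · have h3 : ¬ p ≤ M + 1 := by omega
        simp [h, h3]

/-- Every lattice point of the cube lies in some large simplex, with integral scaled barycentric
coordinates `m i = N α i`. -/
lemma exists_barycentric {n N : ℕ} (v : Fin n → ℕ) (hv : ∀ j, v j ≤ N) :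
    ∃ (π : Equiv.Perm (Fin n)) (m : Fin (n + 1) → ℤ),
      (fun j => (v j : ℝ)) ∈ NDeltaHat n N π ∧ (∀ i, 0 ≤ m i) ∧ (∑ i, m i = N) ∧
      ∀ j, (v j : ℤ) = ∑ i : Fin (n + 1), if (π.symm j : ℕ) < i then m i else 0 := by
  -- Sorting `-v` increasingly sorts `v` decreasingly.
  let π := Tuple.sort (fun j => -(v j : ℤ))
  have hmono : ∀ a b : Fin n, a ≤ b → v (π b) ≤ v (π a) := fun a b hab => by
    have := Tuple.monotone_sort (fun j => -(v j : ℤ)) hab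
    simp only [Function.comp_apply] at this
    change -(v (π a) : ℤ) ≤ -(v (π b) : ℤ) at this
    omega
  -- The sequence `N, v_{π(1)}, …, v_{π(n)}, 0, 0, …`.
  let t : ℕ → ℤ := fun k =>
    match k with
    | 0 => (N : ℤ)
    | k + 1 => if h : k < n then (v (π ⟨k, h⟩) : ℤ) else 0
  have ht : t (n + 1) = 0 := by simp [t]
  have htelescope : ∀ p, p ≤ n + 1 →
      ∑ i : Fin (n + 1), (if p ≤ i.val then t i - t (i + 1) else 0) = t p := fun p hp => by
    rw [Fin.sum_univ_eq_sum_range (fun i => if p ≤ i then t i - t (i + 1) else 0) (n + 1),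
      sum_range_telescope_ite, if_pos hp, ht, sub_zero]
  refine ⟨π, fun i => t i - t (i + 1), ⟨fun j => ⟨by positivity, Nat.cast_le.mpr (hv j)⟩, ?_⟩,
    ?_, ?_, ?_⟩
  · intro j hj
    have hj' : j < n := by omega
    simp only [seqOf, hj, hj', dite_true]
    exact_mod_cast hmono _ _ (by simp)
  · rintro ⟨i, hi⟩
    cases i with
    | zero =>
      simp only [t]
      split_ifs with h
      · have := hv (π ⟨0, h⟩)
        omega
      · omega
    | succ k =>
      have hk : k < n := by omega
      simp only [t, hk, dite_true]
      split_ifs with h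
      · have := hmono ⟨k, hk⟩ ⟨k + 1, h⟩ (by simp)
        omega
      · omega
  · simpa only [Nat.zero_le, if_true] using htelescope 0 (by omega)
  · intro j
    have := htelescope ((π.symm j : ℕ) + 1) (by have := (π.symm j).isLt; omega)
    simp only [Nat.lt_iff_add_one_le]
    rw [this]
    simp [t]

/-- The Simmons-Su labeling: if `L` assigns to each vertex `v` of Kuhn's triangulation of
`[0,N]^n` the value `L(v) = ∑_{i=0}^n i·N·α(v)_i mod (n+1)`, where `α(v)` are the
barycentric coordinates of `v` with respect to any large simplex `NΔ̂_π` containing it,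
then the labels of the `n+1` vertices of every cell are pairwise distinct. -/
theorem simmons_su_labeling (n N : ℕ) (hn : 1 ≤ n) (hN : 1 ≤ N)
    (L : (Fin n → ℕ) → ZMod (n + 1))
    (hL : ∀ v : Fin n → ℕ, (∀ j, v j ≤ N) →
      ∀ π : Equiv.Perm (Fin n), (fun j => (v j : ℝ)) ∈ NDeltaHat n N π →
      ∀ α : Fin (n + 1) → ℝ, (∀ i, 0 ≤ α i) → (∑ i : Fin (n + 1), α i = 1) →
      (∀ j : Fin n, (v j : ℝ) = ∑ i : Fin (n + 1), α i * largeVertex n N π i.val j) →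
      ∀ m : Fin (n + 1) → ℤ, (∀ i, (N : ℝ) * α i = (m i : ℝ)) →
      L v = ((∑ i : Fin (n + 1), (i.val : ℤ) * m i : ℤ) : ZMod (n + 1)))
    (x : Fin n → ℕ) (hx : ∀ j, x j ≤ N - 1) (σ : Equiv.Perm (Fin n)) :
    Function.Injective (fun k : Fin (n + 1) => L (cellVertex x σ k.val)) := by
  have hlabel : ∀ v : Fin n → ℕ, (∀ j, v j ≤ N) → L v = ((∑ j, v j : ℕ) : ZMod (n + 1)) := by
    intro v hv
    obtain ⟨π, m, hmem, hm0, hm1, hmv⟩ := exists_barycentric v hv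
    have hN0 : (N : ℝ) ≠ 0 := by positivity
    rw [hL v hv π hmem (fun i => (m i : ℝ) / N)
      (fun i => div_nonneg (by exact_mod_cast hm0 i) (by positivity)) ?_ ?_ m
      (fun i => by field_simp), sum_eq_of_barycentric π v m hmv]
    · push_cast
      rfl
    · rw [← Finset.sum_div, div_eq_one_iff_eq hN0]
      exact_mod_cast hm1
    · intro j
      have h : (v j : ℝ) = ((∑ i : Fin (n + 1), if (π.symm j : ℕ) < i then m i else 0 : ℤ) : ℝ) := by
        exact_mod_cast hmv j
      rw [h]
      push_cast
      refine Finset.sum_congr rfl fun i _ => ?_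
      simp only [largeVertex]
      split_ifs
      · field_simp
      · simp
  have hcell : ∀ k : Fin (n + 1),
      L (cellVertex x σ k.val) = ((∑ j, x j : ℕ) : ZMod (n + 1)) + (k.val : ZMod (n + 1)) := by
    intro k
    rw [hlabel _ fun j => ?_]
    · simp_rw [cellVertex_apply]
      rw [Finset.sum_add_distrib, sum_indicator_symm_lt σ k (Nat.lt_succ_iff.mp k.isLt),
        Nat.cast_add]
    · rw [cellVertex_apply]
      have := hx j
      split_ifs <;> omega
  intro a b hab
  simp only [hcell, add_right_inj] at hab
  rw [ZMod.natCast_eq_natCast_iff', Nat.mod_eq_of_lt a.isLt, Nat.mod_eq_of_lt b.isLt] at hab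
  exact Fin.ext hab
end
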